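/- arXiv:1203.6869 — 2 statements merged into one kernel-verified Lean document; each statement's English description precedes it below -/
import Mathlib

section
/- For all ψ, α ∈ ℝ, the element r(ψ,α) = ½(P_a ⊗ J^a + J^a ⊗ P_a) + ½ tanh(ψ/2)(P₂ ∧ J₀ − P₀ ∧ J₂) + (α / (4 cosh²(ψ/2))) P₂ ∧ P₀ of iso(2,1) ⊗ iso(2,1) is invariant under the Cartan subalgebra 𝔥₂ = span{J₁, P₁}: for every x ∈ 𝔥₂, (ad_x ⊗ id + id ⊗ ad_x)(r(ψ,α)) = 0. -/
noncomputable section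

open scoped TensorProduct

/-- The ambient associative algebra: real 4×4 matrices.  `iso(2,1)` is realized inside it
via the standard affine embedding `x ↦ [[u, a], [0, 0]]`, and the Lie bracket is the
matrix commutator `⁅x, y⁆ = x * y - y * x`. -/
abbrev G : Type := Matrix (Fin 4) (Fin 4) ℝ

/-- The totally antisymmetric tensor in three dimensions with `eps 0 1 2 = 1`. -/
def eps (a b c : Fin 3) : ℝ :=
  ((((b : ℕ) : ℝ) - ((a : ℕ) : ℝ)) * (((c : ℕ) : ℝ) - ((a : ℕ) : ℝ)) *
    (((c : ℕ) : ℝ) - ((b : ℕ) : ℝ))) / 2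

/-- The Minkowski metric η = diag(1, −1, −1); it coincides with its inverse, so `ηf`
is used both for lower and upper indices. -/
def ηf (a b : Fin 3) : ℝ := if a = b then (if a = (0 : Fin 3) then 1 else -1) else 0

/-- The 3×3 Lorentz generators of so(2,1): `(J3 a) b c = (J_a)^b{}_c = ε_{ac}{}^b`. -/
def J3 (a : Fin 3) : Matrix (Fin 3) (Fin 3) ℝ :=
  Matrix.of fun b c => ηf b b * eps a c b

/-- Embedding of a pair (3×3 matrix `u`, vector `x`) as the 4×4 matrix `[[u, x], [0, 0]]`. -/
def algEmb (u : Matrix (Fin 3) (Fin 3) ℝ) (x : Fin 3 → ℝ) : G :=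
  Matrix.of fun i j =>
    if hi : (i : ℕ) < 3 then
      if hj : (j : ℕ) < 3 then u ⟨i, hi⟩ ⟨j, hj⟩ else x ⟨i, hi⟩
    else 0

/-- The Lorentz generators `J_a` of iso(2,1), as 4×4 matrices. -/
def Jg (a : Fin 3) : G := algEmb (J3 a) 0

/-- The translation generators `P_a` of iso(2,1), as 4×4 matrices. -/
def Pg (a : Fin 3) : G := algEmb 0 (fun b => if b = a then 1 else 0)

/-- `iso(2,1)` = span{J₀, J₁, J₂, P₀, P₁, P₂} inside the 4×4 matrices. -/
def iso21 : Submodule ℝ G := Submodule.span ℝ (Set.range Jg ∪ Set.range Pg)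

/-- 𝔤 ⊗ 𝔤. -/
abbrev T2 : Type := TensorProduct ℝ G G

/-- `ad_x = [x, ·]` as a linear map. -/
def adL (x : G) : G →ₗ[ℝ] G := LinearMap.mulLeft ℝ x - LinearMap.mulRight ℝ x

/-- `ad_x ⊗ id + id ⊗ ad_x` acting factor-wise on 𝔤 ⊗ 𝔤. -/
def adT (x : G) : T2 →ₗ[ℝ] T2 :=
  TensorProduct.map (adL x) LinearMap.id + TensorProduct.map LinearMap.id (adL x)

/-- `x ∧ y = x ⊗ y − y ⊗ x` for `x, y ∈ 𝔤`. -/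
def wT (x y : G) : T2 := x ⊗ₜ[ℝ] y - y ⊗ₜ[ℝ] x

/-- The ad-invariant symmetric element `½(P_a ⊗ J^a + J^a ⊗ P_a)`. -/
def tHalf : T2 :=
  ∑ a : Fin 3, ∑ b : Fin 3, ((1 : ℝ) / 2 * ηf a b) • (Pg a ⊗ₜ[ℝ] Jg b + Jg b ⊗ₜ[ℝ] Pg a)

theorem adL_apply (x y : G) : adL x y = x * y - y * x := rfl

theorem algEmb_commutator (u v : Matrix (Fin 3) (Fin 3) ℝ) (x y : Fin 3 → ℝ) :
    adL (algEmb u x) (algEmb v y) = algEmb (u * v - v * u) (u.mulVec y - v.mulVec x) := by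
  ext i j
  fin_cases i <;> fin_cases j <;>
    simp [adL_apply, algEmb, Matrix.mul_apply, Matrix.mulVec, dotProduct, Fin.sum_univ_succ]

theorem algEmb_zero : algEmb 0 0 = 0 := by
  ext i j
  simp [algEmb]

theorem adL_Pg_Pg (a b : Fin 3) : adL (Pg a) (Pg b) = 0 := by
  simp [Pg, algEmb_commutator, algEmb_zero]

theorem adL_self (x : G) : adL x x = 0 := by
  simp [adL_apply]

theorem J3_one_commutator_zero : J3 1 * J3 0 - J3 0 * J3 1 = J3 2 := by
  ext i j
  fin_cases i <;> fin_cases j <;>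
    norm_num [J3, ηf, eps, Matrix.mul_apply, Fin.sum_univ_three] <;> decide

theorem J3_one_commutator_two : J3 1 * J3 2 - J3 2 * J3 1 = J3 0 := by
  ext i j
  fin_cases i <;> fin_cases j <;>
    norm_num [J3, ηf, eps, Matrix.mul_apply, Fin.sum_univ_three]

/-- `J_a` acts on the basis vector `e_b` by `ε_{ab}{}^c e_c`. -/
theorem J3_mulVec (a b : Fin 3) :
    (J3 a).mulVec (fun c => if c = b then 1 else 0) = fun c => ηf c c * eps a b c := by
  ext c
  simp [J3, Matrix.mulVec, dotProduct]

theorem adL_Jg_Pg (a b : Fin 3) :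
    adL (Jg a) (Pg b) = algEmb 0 (fun c => ηf c c * eps a b c) := by
  simp [Jg, Pg, algEmb_commutator, J3_mulVec]

theorem adL_Pg_Jg (a b : Fin 3) :
    adL (Pg a) (Jg b) = algEmb 0 (fun c => ηf c c * eps a b c) := by
  simp only [Jg, Pg, algEmb_commutator, J3_mulVec]
  congr 1
  · simp
  · ext c
    simp [eps]
    ring

theorem adL_Jg_one_Jg_zero : adL (Jg 1) (Jg 0) = Jg 2 := by
  simp [Jg, algEmb_commutator, J3_one_commutator_zero]

theorem adL_Jg_one_Jg_two : adL (Jg 1) (Jg 2) = Jg 0 := by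
  simp [Jg, algEmb_commutator, J3_one_commutator_two]

theorem algEmb_eps_one_zero : algEmb 0 (fun c => ηf c c * eps 1 0 c) = Pg 2 := by
  rw [Pg]
  congr 1
  ext c
  fin_cases c <;> norm_num [ηf, eps] <;> decide

theorem algEmb_eps_one_one : algEmb 0 (fun c => ηf c c * eps 1 1 c) = 0 := by
  rw [← algEmb_zero]
  congr 1
  ext c
  simp [eps]

theorem algEmb_eps_one_two : algEmb 0 (fun c => ηf c c * eps 1 2 c) = Pg 0 := by
  rw [Pg]
  congr 1
  ext c
  fin_cases c <;> norm_num [ηf, eps]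

theorem adT_tmul (x y z : G) :
    adT x (y ⊗ₜ[ℝ] z) = adL x y ⊗ₜ[ℝ] z + y ⊗ₜ[ℝ] adL x z := rfl

theorem adT_add (x y : G) (t : T2) : adT (x + y) t = adT x t + adT y t := by
  have h : adL (x + y) = adL x + adL y := by
    ext1 z
    simp only [LinearMap.add_apply, adL_apply]
    noncomm_ring
  simp only [adT, h, TensorProduct.map_add_left, TensorProduct.map_add_right,
    LinearMap.add_apply]
  abel

theorem adT_smul (c : ℝ) (x : G) (t : T2) : adT (c • x) t = c • adT x t := by
  have h : adL (c • x) = c • adL x := by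
    ext1 z
    simp [adL_apply, smul_sub]
  simp [adT, h, TensorProduct.map_smul_left, TensorProduct.map_smul_right]

theorem tHalf_eq : tHalf = (1 / 2 : ℝ) • ((Pg 0 ⊗ₜ[ℝ] Jg 0 + Jg 0 ⊗ₜ[ℝ] Pg 0)
    - (Pg 1 ⊗ₜ[ℝ] Jg 1 + Jg 1 ⊗ₜ[ℝ] Pg 1) - (Pg 2 ⊗ₜ[ℝ] Jg 2 + Jg 2 ⊗ₜ[ℝ] Pg 2)) := by
  simp only [tHalf, ηf, Fin.sum_univ_three]
  norm_num [Fin.ext_iff]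
  module

/-- For all ψ, α ∈ ℝ, the element
`r(ψ,α) = ½(P_a ⊗ J^a + J^a ⊗ P_a) + ½ tanh(ψ/2)(P₂ ∧ J₀ − P₀ ∧ J₂)
          + (α / (4 cosh²(ψ/2))) P₂ ∧ P₀`
of iso(2,1) ⊗ iso(2,1) is invariant under the Cartan subalgebra 𝔥₂ = span{J₁, P₁}:
`(ad_x ⊗ id + id ⊗ ad_x)(r(ψ,α)) = 0` for every `x ∈ 𝔥₂`. -/
theorem stmt10 (ψ α : ℝ) :
    ∀ x ∈ Submodule.span ℝ ({Jg 1, Pg 1} : Set G),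
      adT x (tHalf
        + (Real.tanh (ψ / 2) / 2) • (wT (Pg 2) (Jg 0) - wT (Pg 0) (Jg 2))
        + (α / (4 * Real.cosh (ψ / 2) ^ 2)) • wT (Pg 2) (Pg 0)) = 0 := by
  intro x hx
  obtain ⟨c, d, rfl⟩ := Submodule.mem_span_pair.mp hx
  have hJ : adT (Jg 1) (tHalf
      + (Real.tanh (ψ / 2) / 2) • (wT (Pg 2) (Jg 0) - wT (Pg 0) (Jg 2))
      + (α / (4 * Real.cosh (ψ / 2) ^ 2)) • wT (Pg 2) (Pg 0)) = 0 := by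
    simp only [tHalf_eq, wT, map_add, map_sub, map_smul, adT_tmul, adL_Jg_Pg, adL_self,
      adL_Jg_one_Jg_zero, adL_Jg_one_Jg_two, algEmb_eps_one_zero, algEmb_eps_one_one,
      algEmb_eps_one_two, TensorProduct.zero_tmul, TensorProduct.tmul_zero]
    module
  have hP : adT (Pg 1) (tHalf
      + (Real.tanh (ψ / 2) / 2) • (wT (Pg 2) (Jg 0) - wT (Pg 0) (Jg 2))
      + (α / (4 * Real.cosh (ψ / 2) ^ 2)) • wT (Pg 2) (Pg 0)) = 0 := by
    simp only [tHalf_eq, wT, map_add, map_sub, map_smul, adT_tmul, adL_Pg_Jg, adL_Pg_Pg,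
      algEmb_eps_one_zero, algEmb_eps_one_one, algEmb_eps_one_two,
      TensorProduct.zero_tmul, TensorProduct.tmul_zero]
    module
  rw [adT_add, adT_smul, adT_smul, hJ, hP, smul_zero, smul_zero, add_zero]
end
end

section
/- Every Cartan subalgebra of iso(2,1) is conjugate, under the adjoint action of the Poincaré group ISO(2,1), to either 𝔥₁ = span{J₀, P₀} or 𝔥₂ = span{J₁, P₁}; that is, for every Cartan subalgebra 𝔥 ⊆ iso(2,1) there exists g ∈ ISO(2,1) with Ad(g)(𝔥) = 𝔥₁ or Ad(g)(𝔥) = 𝔥₂. -/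
noncomputable section

open scoped TensorProduct

/-- The Minkowski metric as a 3×3 matrix. -/
def ηm : Matrix (Fin 3) (Fin 3) ℝ := Matrix.of fun a b => ηf a b

/-- The full Lorentz group in three dimensions: {v | vᵀ η v = η}. -/
def LorentzSet : Set (Matrix (Fin 3) (Fin 3) ℝ) := {v | v.transpose * ηm * v = ηm}

theorem one_mem_LorentzSet : (1 : Matrix (Fin 3) (Fin 3) ℝ) ∈ LorentzSet := by
  simp [LorentzSet]

/-- The proper orthochronous Lorentz group SO⁺(2,1): the identity component of
the Lorentz group {v | vᵀ η v = η}. -/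
def SOplus : Set (Matrix (Fin 3) (Fin 3) ℝ) :=
  Subtype.val '' connectedComponent (⟨1, one_mem_LorentzSet⟩ : LorentzSet)

/-- Embedding of a pair (3×3 matrix `u`, vector `a`) as the 4×4 matrix `[[u, a], [0, 1]]`. -/
def grpEmb (u : Matrix (Fin 3) (Fin 3) ℝ) (a : Fin 3 → ℝ) : G :=
  Matrix.of fun i j =>
    if hi : (i : ℕ) < 3 then
      if hj : (j : ℕ) < 3 then u ⟨i, hi⟩ ⟨j, hj⟩ else a ⟨i, hi⟩
    else if (j : ℕ) < 3 then 0 else 1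

/-- The Poincaré group ISO(2,1) = SO⁺(2,1) ⋉ ℝ³, realized as 4×4 matrices `[[u, a], [0, 1]]`. -/
def ISOgrp : Set G := {M | ∃ u ∈ SOplus, ∃ a : Fin 3 → ℝ, M = grpEmb u a}

/-- The adjoint action `Ad(g) : x ↦ g x g⁻¹` as a linear map on the ambient matrix algebra. -/
def conjLin (g : G) : G →ₗ[ℝ] G :=
  (LinearMap.mulLeft ℝ g).comp (LinearMap.mulRight ℝ g⁻¹)

/-- Span of all brackets `⁅x, y⁆` with `x ∈ h`, `y ∈ k`. -/
def bracketSpan (h k : Submodule ℝ G) : Submodule ℝ G :=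
  Submodule.span ℝ {z : G | ∃ x ∈ h, ∃ y ∈ k, z = ⁅x, y⁆}

/-- Lower central series of a subalgebra `h`. -/
def lcs (h : Submodule ℝ G) : ℕ → Submodule ℝ G
  | 0 => h
  | n + 1 => bracketSpan h (lcs h n)

/-- `h` is a Cartan subalgebra of iso(2,1): a nilpotent Lie subalgebra of iso(2,1)
that coincides with its own normalizer in iso(2,1). -/
def IsCartanIn (h : Submodule ℝ G) : Prop :=
  h ≤ iso21 ∧ (∀ x ∈ h, ∀ y ∈ h, ⁅x, y⁆ ∈ h) ∧ (∃ n, lcs h n = ⊥) ∧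
    (∀ x ∈ iso21, (∀ y ∈ h, ⁅x, y⁆ ∈ h) → x ∈ h)

/-- The general element `x^a J_a + y^a P_a` of iso(2,1). -/
def isoElem (x y : Fin 3 → ℝ) : G :=
  !![0, -x 2, x 1, y 0; -x 2, 0, x 0, y 1; x 1, -x 0, 0, y 2; 0, 0, 0, 0]

/-- The Lorentzian cross product `(x × y)^c = ε_{ab}^c x^a y^b`. -/
def lorentzCross (x y : Fin 3 → ℝ) : Fin 3 → ℝ :=
  ![x 1 * y 2 - x 2 * y 1, x 0 * y 2 - x 2 * y 0, x 1 * y 0 - x 0 * y 1]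

/-- The Minkowski inner product. -/
def minkowski (x y : Fin 3 → ℝ) : ℝ := x 0 * y 0 - x 1 * y 1 - x 2 * y 2

theorem isoElem_add (x y x' y' : Fin 3 → ℝ) :
    isoElem x y + isoElem x' y' = isoElem (x + x') (y + y') := by
  ext i j
  fin_cases i <;> fin_cases j <;> simp [isoElem] <;> ring

theorem smul_isoElem (c : ℝ) (x y : Fin 3 → ℝ) :
    c • isoElem x y = isoElem (c • x) (c • y) := by
  ext i j
  fin_cases i <;> fin_cases j <;> simp [isoElem]

theorem isoElem_zero : isoElem 0 0 = 0 := by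
  ext i j
  fin_cases i <;> fin_cases j <;> simp [isoElem]

theorem isoElem_inj {x y x' y' : Fin 3 → ℝ} (h : isoElem x y = isoElem x' y') :
    x = x' ∧ y = y' := by
  have e := fun i j => congrFun (congrFun h i) j
  constructor <;> ext i <;> fin_cases i
  · simpa [isoElem] using e 1 2
  · simpa [isoElem] using e 0 2
  · simpa [isoElem] using e 0 1
  · simpa [isoElem] using e 0 3
  · simpa [isoElem] using e 1 3
  · simpa [isoElem] using e 2 3

theorem lie_isoElem (x y x' y' : Fin 3 → ℝ) :
    ⁅isoElem x y, isoElem x' y'⁆ =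
      isoElem (lorentzCross x x') (lorentzCross x y' - lorentzCross x' y) := by
  rw [Ring.lie_def]
  ext i j
  fin_cases i <;> fin_cases j <;>
    simp [isoElem, lorentzCross] <;> ring

theorem lie_smul_add_smul (x y z : G) (a b : ℝ) :
    ⁅x, a • y + b • z⁆ = a • ⁅x, y⁆ + b • ⁅x, z⁆ := by
  simp only [Ring.lie_def, mul_add, add_mul, mul_smul_comm, smul_mul_assoc]
  module

theorem Jg_eq (a : Fin 3) : Jg a = isoElem (Pi.single a 1) 0 := by
  ext i j
  fin_cases a <;> fin_cases i <;> fin_cases j <;>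
    simp [isoElem, Jg, algEmb, J3, ηf, eps] <;> norm_num

theorem Pg_eq (a : Fin 3) : Pg a = isoElem 0 (Pi.single a 1) := by
  ext i j
  fin_cases a <;> fin_cases i <;> fin_cases j <;>
    simp [isoElem, Pg, algEmb]

theorem isoElem_mem_iso21 (x y : Fin 3 → ℝ) : isoElem x y ∈ iso21 := by
  have e : isoElem x y = ∑ a, (x a • Jg a + y a • Pg a) := by
    simp only [Jg_eq, Pg_eq, smul_isoElem, isoElem_add, Fin.sum_univ_three]
    congr 1 <;> ext i <;> fin_cases i <;> simp
  rw [e]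
  refine Submodule.sum_mem _ fun a _ => Submodule.add_mem _ ?_ ?_
  · exact Submodule.smul_mem _ _ (Submodule.subset_span (Or.inl ⟨a, rfl⟩))
  · exact Submodule.smul_mem _ _ (Submodule.subset_span (Or.inr ⟨a, rfl⟩))

theorem exists_isoElem_of_mem_iso21 {z : G} (hz : z ∈ iso21) : ∃ x y, z = isoElem x y := by
  induction hz using Submodule.span_induction with
  | mem z hz =>
    rcases hz with ⟨a, rfl⟩ | ⟨a, rfl⟩
    · exact ⟨_, _, Jg_eq a⟩
    · exact ⟨_, _, Pg_eq a⟩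
  | zero => exact ⟨0, 0, isoElem_zero.symm⟩
  | add _ _ _ _ h₁ h₂ =>
    obtain ⟨x, y, rfl⟩ := h₁
    obtain ⟨x', y', rfl⟩ := h₂
    exact ⟨_, _, isoElem_add ..⟩
  | smul c _ _ h =>
    obtain ⟨x, y, rfl⟩ := h
    exact ⟨_, _, smul_isoElem ..⟩

theorem lorentzCross_self (x : Fin 3 → ℝ) : lorentzCross x x = 0 := by
  ext i
  fin_cases i <;> simp [lorentzCross] <;> ring

theorem lorentzCross_zero (x : Fin 3 → ℝ) : lorentzCross x 0 = 0 := by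
  ext i
  fin_cases i <;> simp [lorentzCross]

theorem zero_lorentzCross (x : Fin 3 → ℝ) : lorentzCross 0 x = 0 := by
  ext i
  fin_cases i <;> simp [lorentzCross]

theorem lorentzCross_smul (c : ℝ) (x y : Fin 3 → ℝ) :
    lorentzCross x (c • y) = c • lorentzCross x y := by
  ext i
  fin_cases i <;> simp [lorentzCross] <;> ring

theorem smul_lorentzCross (c : ℝ) (x y : Fin 3 → ℝ) :
    lorentzCross (c • x) y = c • lorentzCross x y := by
  ext i
  fin_cases i <;> simp [lorentzCross] <;> ring

theorem lorentzCross_sub (x y z : Fin 3 → ℝ) :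
    lorentzCross x (y - z) = lorentzCross x y - lorentzCross x z := by
  ext i
  fin_cases i <;> simp [lorentzCross] <;> ring

theorem lorentzCross_lorentzCross (x y : Fin 3 → ℝ) :
    lorentzCross x (lorentzCross x y) = minkowski x y • x - minkowski x x • y := by
  ext i
  fin_cases i <;> simp [lorentzCross, minkowski] <;> ring

theorem minkowski_lorentzCross (x y : Fin 3 → ℝ) : minkowski x (lorentzCross x y) = 0 := by
  simp [lorentzCross, minkowski]
  ring

theorem eq_smul_of_lorentzCross_eq_zero {x y : Fin 3 → ℝ} (hx : minkowski x x ≠ 0)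
    (h : lorentzCross x y = 0) : y = (minkowski x y / minkowski x x) • x := by
  have e := lorentzCross_lorentzCross x y
  rw [h, lorentzCross_zero, eq_comm, sub_eq_zero] at e
  rw [div_eq_inv_mul, mul_smul, e, smul_smul, inv_mul_cancel₀ hx, one_smul]

theorem lorentzCross_eq_zero_of_sq {x y : Fin 3 → ℝ} (hx : minkowski x x ≠ 0)
    (h : lorentzCross x (lorentzCross x y) = 0) : lorentzCross x y = 0 := by
  have e := eq_smul_of_lorentzCross_eq_zero hx h
  rwa [minkowski_lorentzCross, zero_div, zero_smul] at e

theorem lie_eq_zero_of_sq {x y x' y' : Fin 3 → ℝ} (hx : minkowski x x ≠ 0)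
    (h : ⁅isoElem x y, ⁅isoElem x y, isoElem x' y'⁆⁆ = 0) :
    ⁅isoElem x y, isoElem x' y'⁆ = 0 := by
  rw [lie_isoElem, lie_isoElem, ← isoElem_zero] at h
  obtain ⟨h₁, h₂⟩ := isoElem_inj h
  have h₃ := lorentzCross_eq_zero_of_sq hx h₁
  rw [h₃, zero_lorentzCross, sub_zero] at h₂
  have e := eq_smul_of_lorentzCross_eq_zero hx h₃
  rw [lie_isoElem, h₃]
  rw [e, smul_lorentzCross, ← lorentzCross_smul, ← lorentzCross_sub] at h₂ ⊢
  rw [lorentzCross_eq_zero_of_sq hx h₂, isoElem_zero]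

theorem lie_eq_zero_iff {x y x' y' : Fin 3 → ℝ} (hx : minkowski x x ≠ 0) :
    ⁅isoElem x y, isoElem x' y'⁆ = 0 ↔
      isoElem x' y' ∈ Submodule.span ℝ ({isoElem x y, isoElem 0 x} : Set G) := by
  rw [Submodule.mem_span_pair]
  constructor
  · intro h
    rw [lie_isoElem, ← isoElem_zero] at h
    obtain ⟨h₁, h₂⟩ := isoElem_inj h
    have e := eq_smul_of_lorentzCross_eq_zero hx h₁
    set c := minkowski x x' / minkowski x x
    rw [e, smul_lorentzCross, ← lorentzCross_smul, ← lorentzCross_sub] at h₂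
    have e' := eq_smul_of_lorentzCross_eq_zero hx h₂
    refine ⟨c, minkowski x (y' - c • y) / minkowski x x, ?_⟩
    rw [smul_isoElem, smul_isoElem, isoElem_add, ← e', ← e]
    simp
  · rintro ⟨a, b, h⟩
    rw [← h, lie_smul_add_smul, lie_isoElem, lie_isoElem, lorentzCross_zero, zero_lorentzCross,
      lorentzCross_self, sub_self, sub_zero, isoElem_zero, smul_zero, smul_zero, add_zero]

theorem iterate_lie_mem_lcs {h : Submodule ℝ G} {x y : G} (hx : x ∈ h) (hy : y ∈ h) (n : ℕ) :
    (fun z : G => ⁅x, z⁆)^[n] y ∈ lcs h n := by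
  induction n with
  | zero => exact hy
  | succ n ih =>
    rw [Function.iterate_succ_apply']
    exact Submodule.subset_span ⟨x, hx, _, ih, rfl⟩

theorem lie_eq_zero_of_iterate {x y : Fin 3 → ℝ} (hx : minkowski x x ≠ 0) (n : ℕ)
    (x' y' : Fin 3 → ℝ) (h : (fun z : G => ⁅isoElem x y, z⁆)^[n] (isoElem x' y') = 0) :
    ⁅isoElem x y, isoElem x' y'⁆ = 0 := by
  induction n generalizing x' y' with
  | zero =>
    rw [Function.iterate_zero_apply] at h
    rw [h, Ring.lie_def, mul_zero, zero_mul, sub_zero]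
  | succ n ih =>
    rw [Function.iterate_succ_apply, lie_isoElem] at h
    refine lie_eq_zero_of_sq hx ?_
    rw [lie_isoElem x y x' y']
    exact ih _ _ h

/-- A Cartan subalgebra containing an element with non-null Lorentz part is the centralizer of
that element. -/
theorem IsCartanIn.eq_span {h : Submodule ℝ G} (hh : IsCartanIn h) {x y : Fin 3 → ℝ}
    (hx : minkowski x x ≠ 0) (hmem : isoElem x y ∈ h) :
    h = Submodule.span ℝ ({isoElem x y, isoElem 0 x} : Set G) := by
  obtain ⟨hle, -, ⟨n, hn⟩, hnorm⟩ := hh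
  have hsub : h ≤ Submodule.span ℝ ({isoElem x y, isoElem 0 x} : Set G) := by
    intro z hz
    obtain ⟨x', y', rfl⟩ := exists_isoElem_of_mem_iso21 (hle hz)
    refine (lie_eq_zero_iff hx).1 (lie_eq_zero_of_iterate hx n _ _ ?_)
    have := iterate_lie_mem_lcs hmem hz n
    rwa [hn, Submodule.mem_bot] at this
  refine le_antisymm hsub (Submodule.span_le.2 ?_)
  rintro _ (rfl | rfl)
  · exact hmem
  · refine hnorm _ (isoElem_mem_iso21 _ _) fun z hz => ?_
    obtain ⟨a, b, rfl⟩ := Submodule.mem_span_pair.1 (hsub hz)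
    have e : ⁅isoElem 0 x, isoElem x y⁆ = 0 := by
      rw [lie_isoElem, zero_lorentzCross, zero_lorentzCross, lorentzCross_self, sub_zero,
        isoElem_zero]
    rw [lie_smul_add_smul, e, Ring.lie_def, sub_self, smul_zero, smul_zero, add_zero]
    exact h.zero_mem

/-- If `n` is null and nonzero and every Lorentz part occurring in a Cartan subalgebra `h` is a
multiple of `n`, then a non-null Lorentz part occurs in `h`; so this situation is impossible. -/
theorem exists_nonnull_of_null {h : Submodule ℝ G} (hh : IsCartanIn h) {n y : Fin 3 → ℝ}
    (hn : minkowski n n = 0) (hn0 : n 0 ≠ 0) (hmem : isoElem n y ∈ h)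
    (hL : ∀ x z, isoElem x z ∈ h → ∃ c : ℝ, x = c • n) :
    ∃ x z, isoElem x z ∈ h ∧ minkowski x x ≠ 0 := by
  obtain ⟨hle, -, -, hnorm⟩ := hh
  have hn' : n 0 * n 0 = n 1 * n 1 + n 2 * n 2 := by
    unfold minkowski at hn
    linarith
  have translation {v : Fin 3 → ℝ} (hv : isoElem 0 (lorentzCross n v) ∈ h) :
      isoElem 0 v ∈ h := by
    refine hnorm _ (isoElem_mem_iso21 _ _) fun z hz => ?_
    obtain ⟨x', y', rfl⟩ := exists_isoElem_of_mem_iso21 (hle hz)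
    obtain ⟨c, rfl⟩ := hL _ _ hz
    rw [lie_isoElem, zero_lorentzCross, zero_lorentzCross, smul_lorentzCross]
    have := h.smul_mem (-c) hv
    rwa [smul_isoElem, smul_zero, neg_smul, ← zero_sub] at this
  have hPn : isoElem 0 n ∈ h := by
    refine translation ?_
    rw [lorentzCross_self, isoElem_zero]
    exact h.zero_mem
  set m : Fin 3 → ℝ := ![0, -n 2, n 1] with hm
  have hnm : lorentzCross n m = n 0 • n := by
    ext i
    fin_cases i <;> simp [lorentzCross, hm]
    linarith
  have hPm : isoElem 0 m ∈ h := by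
    refine translation ?_
    rw [hnm]
    simpa [smul_isoElem] using h.smul_mem (n 0) hPn
  have hP (v : Fin 3 → ℝ) : isoElem 0 v ∈ h := by
    refine translation ?_
    have e : lorentzCross n v =
        (lorentzCross n v 0 / n 0) • n + (minkowski n v / n 0) • m := by
      ext i
      fin_cases i <;> simp [lorentzCross, minkowski, hm] <;> field_simp <;>
        grind
    rw [e]
    simpa [smul_isoElem, isoElem_add] using
      h.add_mem (h.smul_mem (lorentzCross n v 0 / n 0) hPn) (h.smul_mem _ hPm)
  have hJn : isoElem n 0 ∈ h := by
    simpa [isoElem_add] using h.add_mem hmem (hP (-y))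
  refine ⟨m, 0, hnorm _ (isoElem_mem_iso21 _ _) fun z hz => ?_, ?_⟩
  · obtain ⟨x', y', rfl⟩ := exists_isoElem_of_mem_iso21 (hle hz)
    obtain ⟨c, rfl⟩ := hL _ _ hz
    have hmn : lorentzCross m n = -(n 0) • n := by
      ext i
      fin_cases i <;> simp [lorentzCross, hm] <;> linarith
    rw [lie_isoElem, lorentzCross_smul, hmn]
    have := h.add_mem (h.smul_mem c (h.smul_mem (-(n 0)) hJn)) (hP (lorentzCross m y'))
    rwa [smul_isoElem, smul_isoElem, isoElem_add, smul_zero, smul_zero, zero_add, add_zero,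
      ← sub_zero (lorentzCross m y'), ← lorentzCross_zero (c • n)] at this
  · have e : minkowski m m = -(n 0 * n 0) := by
      simp [minkowski, hm]
      linarith
    rw [e]
    exact neg_ne_zero.2 (mul_ne_zero hn0 hn0)

theorem eq_smul_of_null {n x : Fin 3 → ℝ} (hn : minkowski n n = 0) (hn0 : n 0 ≠ 0)
    (hx : minkowski x x = 0) (hnx : minkowski n x = 0) : x = (x 0 / n 0) • n := by
  unfold minkowski at hn hx hnx
  have hs : (n 0 * x 1 - x 0 * n 1) ^ 2 + (n 0 * x 2 - x 0 * n 2) ^ 2 = 0 := by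
    linear_combination (-(n 0 ^ 2)) * hx - (x 0 ^ 2) * hn + 2 * n 0 * x 0 * hnx
  have h₁ : n 0 * x 1 - x 0 * n 1 = 0 := by
    nlinarith [sq_nonneg (n 0 * x 1 - x 0 * n 1), sq_nonneg (n 0 * x 2 - x 0 * n 2)]
  have h₂ : n 0 * x 2 - x 0 * n 2 = 0 := by
    nlinarith [sq_nonneg (n 0 * x 1 - x 0 * n 1), sq_nonneg (n 0 * x 2 - x 0 * n 2)]
  ext i
  fin_cases i <;> simp <;> field_simp <;> linarith

theorem IsCartanIn.exists_nonnull {h : Submodule ℝ G} (hh : IsCartanIn h) :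
    ∃ x y, isoElem x y ∈ h ∧ minkowski x x ≠ 0 := by
  by_contra! hnull
  have hL : ∀ x y, isoElem x y ∈ h → x = 0 := by
    intro n y hmem
    by_contra hne
    have hn := hnull _ _ hmem
    have hn0 : n 0 ≠ 0 := by
      intro h0
      apply hne
      unfold minkowski at hn
      rw [h0] at hn
      ext i
      fin_cases i <;> simp [h0] <;> nlinarith [sq_nonneg (n 1), sq_nonneg (n 2)]
    obtain ⟨x, z, hx, hx'⟩ := exists_nonnull_of_null hh hn hn0 hmem fun x z hxz => by
      refine ⟨_, eq_smul_of_null hn hn0 (hnull _ _ hxz) ?_⟩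
      have hs := hnull (n + x) (y + z) (by rw [← isoElem_add]; exact h.add_mem hmem hxz)
      have hx := hnull _ _ hxz
      simp only [minkowski, Pi.add_apply] at hs hx hn ⊢
      linarith
    exact hx' (hnull _ _ hx)
  obtain ⟨hle, -, -, hnorm⟩ := hh
  have hP (v : Fin 3 → ℝ) : isoElem 0 v ∈ h := by
    refine hnorm _ (isoElem_mem_iso21 _ _) fun z hz => ?_
    obtain ⟨x', y', rfl⟩ := exists_isoElem_of_mem_iso21 (hle hz)
    obtain rfl := hL _ _ hz
    rw [lie_isoElem, zero_lorentzCross, zero_lorentzCross, zero_lorentzCross, sub_zero,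
      isoElem_zero]
    exact h.zero_mem
  have hJ : isoElem (Pi.single 0 1) 0 ∈ h := by
    refine hnorm _ (isoElem_mem_iso21 _ _) fun z hz => ?_
    obtain ⟨x', y', rfl⟩ := exists_isoElem_of_mem_iso21 (hle hz)
    obtain rfl := hL _ _ hz
    rw [lie_isoElem, lorentzCross_zero]
    exact hP _
  simpa using congrFun (hL _ _ hJ) 0

open scoped Matrix

/-- The rotation by `θ` in the spatial plane followed by the boost of rapidity `t` along the
first spatial axis. -/
def boostRotation (θ t : ℝ) : Matrix (Fin 3) (Fin 3) ℝ :=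
  !![Real.cosh t, Real.sinh t * Real.cos θ, -(Real.sinh t * Real.sin θ);
     Real.sinh t, Real.cosh t * Real.cos θ, -(Real.cosh t * Real.sin θ);
     0, Real.sin θ, Real.cos θ]

theorem ηm_eq : ηm = !![1, 0, 0; 0, -1, 0; 0, 0, -1] := by
  ext i j
  fin_cases i <;> fin_cases j <;> simp [ηm, ηf]

theorem boostRotation_mem_LorentzSet (θ t : ℝ) : boostRotation θ t ∈ LorentzSet := by
  have h₁ := Real.sin_sq_add_cos_sq θ
  have h₂ := Real.cosh_sq t
  change _ = _
  rw [ηm_eq]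
  ext i j
  fin_cases i <;> fin_cases j <;>
    simp [boostRotation, Matrix.mul_apply, Fin.sum_univ_three] <;> grind

theorem boostRotation_mem_SOplus (θ t : ℝ) : boostRotation θ t ∈ SOplus := by
  let f : ℝ × ℝ → LorentzSet := fun p => ⟨boostRotation p.1 p.2, boostRotation_mem_LorentzSet _ _⟩
  have hf : Continuous f := by
    refine Continuous.subtype_mk (continuous_matrix fun i j => ?_) _
    fin_cases i <;> fin_cases j <;> simp [boostRotation] <;> fun_prop
  have h1 : f (0, 0) = ⟨1, one_mem_LorentzSet⟩ := by
    apply Subtype.ext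
    ext i j
    fin_cases i <;> fin_cases j <;> simp [f, boostRotation]
  refine ⟨f (θ, t), ?_, rfl⟩
  exact (isPreconnected_range hf).subset_connectedComponent ⟨_, h1⟩ ⟨_, rfl⟩

theorem minkowski_boostRotation (θ t : ℝ) (x : Fin 3 → ℝ) :
    minkowski (boostRotation θ t *ᵥ x) (boostRotation θ t *ᵥ x) = minkowski x x := by
  have h₁ := Real.sin_sq_add_cos_sq θ
  have h₂ := Real.cosh_sq t
  simp [minkowski, boostRotation, Matrix.mulVec, dotProduct, Fin.sum_univ_three]
  grind

theorem grpEmb_eq (u : Matrix (Fin 3) (Fin 3) ℝ) (a : Fin 3 → ℝ) :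
    grpEmb u a = !![u 0 0, u 0 1, u 0 2, a 0; u 1 0, u 1 1, u 1 2, a 1;
      u 2 0, u 2 1, u 2 2, a 2; 0, 0, 0, 1] := by
  ext i j
  fin_cases i <;> fin_cases j <;> simp [grpEmb]

theorem conjLin_boostRotation (θ t : ℝ) (a x y : Fin 3 → ℝ) :
    conjLin (grpEmb (boostRotation θ t) a) (isoElem x y) =
      isoElem (boostRotation θ t *ᵥ x)
        (boostRotation θ t *ᵥ y - lorentzCross (boostRotation θ t *ᵥ x) a) := by
  have h₁ := Real.sin_sq_add_cos_sq θ
  have h₂ := Real.cosh_sq t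
  have hdet : (grpEmb (boostRotation θ t) a).det = 1 := by
    rw [grpEmb_eq, Matrix.det_succ_row_zero]
    simp [Fin.sum_univ_four, Matrix.det_fin_three, boostRotation, Fin.succAbove]
    grind
  have hcomm : grpEmb (boostRotation θ t) a * isoElem x y =
      isoElem (boostRotation θ t *ᵥ x)
        (boostRotation θ t *ᵥ y - lorentzCross (boostRotation θ t *ᵥ x) a) *
          grpEmb (boostRotation θ t) a := by
    rw [grpEmb_eq]
    ext i j
    fin_cases i <;> fin_cases j <;>
      simp [isoElem, lorentzCross, Matrix.mul_apply, Fin.sum_univ_four, boostRotation,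
        Matrix.mulVec, dotProduct, Fin.sum_univ_three] <;> grind
  change grpEmb _ _ * (isoElem _ _ * (grpEmb _ _)⁻¹) = _
  rw [← mul_assoc, hcomm, mul_assoc, Matrix.mul_nonsing_inv _ (by simp [hdet]), mul_one]

/-- Every non-null vector is mapped to the time axis or to the first spatial axis by a
rotation followed by a boost. -/
theorem exists_boostRotation {x : Fin 3 → ℝ} (hx : minkowski x x ≠ 0) :
    ∃ θ t r : ℝ, boostRotation θ t *ᵥ x = r • Pi.single 0 1 ∨
      boostRotation θ t *ᵥ x = r • Pi.single 1 1 := by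
  obtain ⟨ρ, φ, h1, h2⟩ : ∃ ρ φ : ℝ, x 1 = ρ * Real.cos φ ∧ x 2 = ρ * Real.sin φ :=
    ⟨‖(⟨x 1, x 2⟩ : ℂ)‖, Complex.arg ⟨x 1, x 2⟩, by simp, by simp⟩
  have hφ := Real.sin_sq_add_cos_sq φ
  have hq : minkowski x x = x 0 ^ 2 - ρ ^ 2 := by
    unfold minkowski
    rw [h1, h2]
    linear_combination (-ρ ^ 2) * hφ
  have rotate (t : ℝ) : boostRotation (-φ) t *ᵥ x =
      ![Real.cosh t * x 0 + Real.sinh t * ρ, Real.sinh t * x 0 + Real.cosh t * ρ, 0] := by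
    ext i
    fin_cases i <;>
      simp [boostRotation, Matrix.mulVec, dotProduct, Fin.sum_univ_three, h1, h2] <;> grind
  have boost {a b : ℝ} (hab : b ^ 2 < a ^ 2) : ∃ t, Real.sinh t * a + Real.cosh t * b = 0 := by
    have ha : a ≠ 0 := by
      rintro rfl
      nlinarith [sq_nonneg b]
    have hlt : |b / a| < 1 := by
      rw [abs_div, div_lt_one (abs_pos.2 ha)]
      exact sq_lt_sq.1 hab
    have htanh := Real.tanh_artanh (abs_lt.1 hlt)
    rw [Real.tanh_eq_sinh_div_cosh, div_eq_div_iff (Real.cosh_pos _).ne' ha] at htanh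
    refine ⟨-Real.artanh (b / a), ?_⟩
    rw [Real.sinh_neg, Real.cosh_neg]
    linarith
  rw [hq] at hx
  rcases lt_or_gt_of_ne hx with hlt | hlt
  · obtain ⟨t, ht⟩ := boost (a := ρ) (b := x 0) (by linarith)
    refine ⟨-φ, t, Real.sinh t * x 0 + Real.cosh t * ρ, Or.inr ?_⟩
    rw [rotate]
    ext i
    fin_cases i <;> simp
    linarith
  · obtain ⟨t, ht⟩ := boost (a := x 0) (b := ρ) (by linarith)
    refine ⟨-φ, t, Real.cosh t * x 0 + Real.sinh t * ρ, Or.inl ?_⟩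
    rw [rotate]
    ext i
    fin_cases i <;> simp
    linarith

theorem span_pair_eq_of_ne_zero {r : ℝ} (hr : r ≠ 0) (s : ℝ) (a : Fin 3) :
    Submodule.span ℝ ({isoElem (r • Pi.single a 1) (s • r • Pi.single a 1),
      isoElem 0 (r • Pi.single a 1)} : Set G) = Submodule.span ℝ ({Jg a, Pg a} : Set G) := by
  have hJ : isoElem (r • Pi.single a 1) (s • r • Pi.single a 1) =
      r • Jg a + (s * r) • Pg a := by
    simp [Jg_eq, Pg_eq, smul_isoElem, isoElem_add, mul_smul]
  have hP : isoElem 0 (r • Pi.single a 1) = r • Pg a := by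
    simp [Pg_eq, smul_isoElem]
  rw [hJ, hP]
  apply le_antisymm <;> rw [Submodule.span_le]
  · rintro _ (rfl | rfl) <;> rw [SetLike.mem_coe, Submodule.mem_span_pair]
    · exact ⟨_, _, rfl⟩
    · exact ⟨0, r, by simp⟩
  · rintro _ (rfl | rfl) <;> rw [SetLike.mem_coe, Submodule.mem_span_pair]
    · refine ⟨r⁻¹, -(s * r⁻¹), ?_⟩
      rw [smul_add, smul_smul, smul_smul, smul_smul, inv_mul_cancel₀ hr, add_assoc, ← add_smul]
      have : r⁻¹ * (s * r) + -(s * r⁻¹) * r = 0 := by ring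
      rw [this, zero_smul, add_zero, one_smul]
    · exact ⟨0, r⁻¹, by simp [smul_smul, hr]⟩

/-- Every Cartan subalgebra of iso(2,1) is conjugate, under the adjoint
action of the Poincaré group ISO(2,1), to 𝔥₁ = span{J₀, P₀} or to 𝔥₂ = span{J₁, P₁}. -/
theorem stmt12 :
    ∀ h : Submodule ℝ G, IsCartanIn h →
      ∃ g ∈ ISOgrp,
        Submodule.map (conjLin g) h = Submodule.span ℝ ({Jg 0, Pg 0} : Set G) ∨
        Submodule.map (conjLin g) h = Submodule.span ℝ ({Jg 1, Pg 1} : Set G) := by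
  intro h hh
  obtain ⟨x, y, hmem, hx⟩ := hh.exists_nonnull
  obtain ⟨θ, t, r, hr⟩ := exists_boostRotation hx
  have hw := minkowski_boostRotation θ t x
  set w := boostRotation θ t *ᵥ x with hwdef
  set z := boostRotation θ t *ᵥ y with hzdef
  rw [← hw] at hx
  have hr0 : r ≠ 0 := by
    rintro rfl
    rcases hr with e | e <;> simp [e, minkowski] at hx
  set a := -((minkowski w w)⁻¹ • lorentzCross w z) with ha
  have hz : z - lorentzCross w a = ((minkowski w w)⁻¹ * minkowski w z) • w := by
    rw [ha, ← neg_smul, lorentzCross_smul, lorentzCross_lorentzCross, smul_sub, smul_smul,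
      smul_smul, neg_mul, neg_mul, inv_mul_cancel₀ hx]
    module
  have hzero : conjLin (grpEmb (boostRotation θ t) a) (isoElem 0 x) = isoElem 0 w := by
    rw [conjLin_boostRotation, Matrix.mulVec_zero, zero_lorentzCross, sub_zero]
  have hmap : Submodule.map (conjLin (grpEmb (boostRotation θ t) a)) h =
      Submodule.span ℝ
        {isoElem w (((minkowski w w)⁻¹ * minkowski w z) • w), isoElem 0 w} := by
    rw [hh.eq_span (hw ▸ hx) hmem, Submodule.map_span, Set.image_pair, hzero,
      conjLin_boostRotation, ← hwdef, ← hzdef, hz]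
  refine ⟨_, ⟨_, boostRotation_mem_SOplus θ t, a, rfl⟩, ?_⟩
  rw [hmap]
  rcases hr with e | e
  · left
    rw [e, span_pair_eq_of_ne_zero hr0]
  · right
    rw [e, span_pair_eq_of_ne_zero hr0]
end
end
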